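/- (Expectation shift bound.) Let π and π̃ be two policies in a finite-horizon MDP with shared initial distribution μ₁ and dynamics p, and suppose KL(π(x) ‖ π̃(x)) ≤ ε for all states x. Then for every function f : S → ℝ with 0 ≤ f(x) ≤ f_max for all x, and every time t ≥ 1, E_{x ∼ d_π^t}[f(x)] ≤ E_{x ∼ d_π̃^t}[f(x)] + 2·f_max·t·√ε. -/

import Mathlib

/-!
The proof is an induction on time. Writing `g x` and `gbar x` for the expected value of `f` one
step after `x` under `π` and `πbar`, the induction hypothesis applied to `g` replaces the state
distribution of `π` by that of `πbar`, and `g ≤ gbar + 2 * fmax * √ε` pointwise because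
`∑ |P - Q| ≤ 2 * √KL(P‖Q)`. This weak form of Pinsker's inequality goes through the squared
Hellinger distance: `∑ (√P - √Q)² ≤ KL(P‖Q)` follows from `log y ≤ y - 1` at `y = √Q / √P`
(`hellinger_le`), and Cauchy–Schwarz applied to `|P - Q| = |√P - √Q| * (√P + √Q)` gives the
`ℓ¹` bound (`l1_le`).
-/

open Finset

/-- Expectation of `f` under a PMF on a finite type. -/
noncomputable def pmfExp {α : Type*} [Fintype α] (P : PMF α) (f : α → ℝ) : ℝ :=
  ∑ a, (P a).toReal * f a

/-- Total variation distance `TV(P,Q) = (1/2)·Σ_a |P(a) − Q(a)|`. -/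
noncomputable def tvDist {α : Type*} [Fintype α] (P Q : PMF α) : ℝ :=
  (1 / 2) * ∑ a, |(P a).toReal - (Q a).toReal|

/-- KL divergence `KL(P‖Q) = Σ_a P(a)·ln(P(a)/Q(a))`, interpreted as `+∞`
if `P` is not absolutely continuous with respect to `Q`. -/
noncomputable def klDivPMF {α : Type*} [Fintype α] (P Q : PMF α) : EReal :=
  if ∀ a, Q a = 0 → P a = 0 then
    (((∑ a, (P a).toReal * Real.log ((P a).toReal / (Q a).toReal)) : ℝ) : EReal)
  else ⊤

/-- State distribution of the MDP: `stateDist p π μ₁ n` is the distribution `d_π^{n+1}`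
of the state at time `n+1` when executing policy `π` from initial distribution `μ₁`,
i.e. `d_π^1 = μ₁` and `d_π^{t+1}(x′) = Σ_{x,u} d_π^t(x)·π(u|x)·p(x′|x,u)`. -/
noncomputable def stateDist {S A : Type*} (p : S → A → PMF S) (π : S → PMF A)
    (μ₁ : PMF S) : ℕ → PMF S
  | 0 => μ₁
  | n + 1 => (stateDist p π μ₁ n).bind fun x => (π x).bind fun u => p x u

/-- Total expected cost `J(π) = Σ_{t=1}^T E_{x∼d_π^t} E_{u∼π(x)}[c(x,u)]`. -/
noncomputable def totalCost {S A : Type*} [Fintype S] [Fintype A] (p : S → A → PMF S)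
    (c : S → A → ℝ) (μ₁ : PMF S) (T : ℕ) (π : S → PMF A) : ℝ :=
  ∑ t ∈ Finset.range T,
    pmfExp (stateDist p π μ₁ t) fun x => pmfExp (π x) fun u => c x u

/-- Action-conditioned cost-to-go: `Qact p c π̄ t x u` is the expected sum of costs
over `t` steps obtained by taking action `u` in state `x` and thereafter following
`π̄` for the remaining `t−1` steps. -/
noncomputable def Qact {S A : Type*} [Fintype S] [Fintype A] (p : S → A → PMF S)
    (c : S → A → ℝ) (πbar : S → PMF A) : ℕ → S → A → ℝ
  | 0, _, _ => 0
  | t + 1, x, u =>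
      c x u + pmfExp (p x u) fun x' => pmfExp (πbar x') fun u' => Qact p c πbar t x' u'

/-- `Qpol p c π π̄ t x = Q_t(x, π, π̄)`: expected cost of sampling the first action
from `π(x)` and following `π̄` for the remaining `t−1` steps. -/
noncomputable def Qpol {S A : Type*} [Fintype S] [Fintype A] (p : S → A → PMF S)
    (c : S → A → ℝ) (π πbar : S → PMF A) (t : ℕ) (x : S) : ℝ :=
  pmfExp (π x) fun u => Qact p c πbar t x u

theorem pmf_sum_toReal {α : Type*} [Fintype α] (P : PMF α) : ∑ a, (P a).toReal = 1 := by
  have h := P.tsum_coe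
  rw [tsum_fintype] at h
  rw [← ENNReal.toReal_sum (fun a _ => P.apply_ne_top a), h, ENNReal.toReal_one]

theorem pmfExp_mono {α : Type*} [Fintype α] (P : PMF α) {f g : α → ℝ} (h : ∀ a, f a ≤ g a) :
    pmfExp P f ≤ pmfExp P g :=
  Finset.sum_le_sum fun a _ => mul_le_mul_of_nonneg_left (h a) ENNReal.toReal_nonneg

theorem pmfExp_const {α : Type*} [Fintype α] (P : PMF α) (c : ℝ) :
    pmfExp P (fun _ => c) = c := by
  rw [pmfExp, ← Finset.sum_mul, pmf_sum_toReal, one_mul]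

theorem pmfExp_add_const {α : Type*} [Fintype α] (P : PMF α) (f : α → ℝ) (c : ℝ) :
    pmfExp P (fun a => f a + c) = pmfExp P f + c := by
  simp only [pmfExp, mul_add, Finset.sum_add_distrib, ← Finset.sum_mul, pmf_sum_toReal, one_mul]

theorem pmfExp_mem {α : Type*} [Fintype α] (P : PMF α) {f : α → ℝ} {M : ℝ}
    (h : ∀ a, 0 ≤ f a ∧ f a ≤ M) : 0 ≤ pmfExp P f ∧ pmfExp P f ≤ M :=
  ⟨(pmfExp_const P 0).symm.le.trans (pmfExp_mono P fun a => (h a).1),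
    (pmfExp_mono P fun a => (h a).2).trans (pmfExp_const P M).le⟩

theorem pmfExp_bind {α β : Type*} [Fintype α] [Fintype β] (P : PMF α) (k : α → PMF β)
    (f : β → ℝ) : pmfExp (P.bind k) f = pmfExp P fun a => pmfExp (k a) f := by
  have h : ∀ b, ((P.bind k) b).toReal = ∑ a, (P a).toReal * (k a b).toReal := by
    intro b
    rw [PMF.bind_apply, tsum_fintype, ENNReal.toReal_sum
      (fun a _ => ENNReal.mul_ne_top (P.apply_ne_top a) ((k a).apply_ne_top b))]
    simp only [ENNReal.toReal_mul]
  simp only [pmfExp, h, Finset.sum_mul, Finset.mul_sum, mul_assoc]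
  exact Finset.sum_comm

/-- Termwise lower bound on the KL divergence; the right-hand side sums to the squared
Hellinger distance. -/
theorem kl_term_ge {x y : ℝ} (hx : 0 ≤ x) (hy : 0 ≤ y) (h : y = 0 → x = 0) :
    2 * x - 2 * (√x * √y) ≤ x * Real.log (x / y) := by
  rcases hx.eq_or_lt with rfl | hx
  · simp
  have hy : 0 < y := hy.lt_of_ne fun e => hx.ne' (h e.symm)
  have hsx := Real.sqrt_pos.2 hx
  have hsy := Real.sqrt_pos.2 hy
  have h1 := Real.log_le_sub_one_of_pos (div_pos hsy hsx)
  rw [Real.log_div hsy.ne' hsx.ne', Real.log_sqrt hx.le, Real.log_sqrt hy.le] at h1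
  rw [Real.log_div hx.ne' hy.ne']
  have h2 := mul_le_mul_of_nonneg_left h1 hx.le
  have h3 : x * (√y / √x - 1) = √x * √y - x := by
    have : x * (√y / √x) = √x * √y := by
      rw [mul_div_assoc', div_eq_iff hsx.ne']
      nth_rewrite 1 [← Real.mul_self_sqrt hx.le]
      ring
    rw [mul_sub, this, mul_one]
  linarith

theorem hellinger_le {α : Type*} [Fintype α] (P Q : PMF α) (h : ∀ a, Q a = 0 → P a = 0) :
    ∑ a, (√(P a).toReal - √(Q a).toReal) ^ 2
      ≤ ∑ a, (P a).toReal * Real.log ((P a).toReal / (Q a).toReal) := by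
  have e : ∑ a, (√(P a).toReal - √(Q a).toReal) ^ 2
      = ∑ a, (2 * (P a).toReal - 2 * (√(P a).toReal * √(Q a).toReal)) := by
    have e1 : ∀ a, (√(P a).toReal - √(Q a).toReal) ^ 2
        = (2 * (P a).toReal - 2 * (√(P a).toReal * √(Q a).toReal))
          + ((Q a).toReal - (P a).toReal) := by
      intro a
      rw [sub_sq, Real.sq_sqrt ENNReal.toReal_nonneg, Real.sq_sqrt ENNReal.toReal_nonneg]
      ring
    simp only [e1]
    rw [Finset.sum_add_distrib, Finset.sum_sub_distrib (fun a => (Q a).toReal), pmf_sum_toReal,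
      pmf_sum_toReal, sub_self, add_zero]
  rw [e]
  refine Finset.sum_le_sum fun a _ =>
    kl_term_ge ENNReal.toReal_nonneg ENNReal.toReal_nonneg fun hq => ?_
  rw [h a ((ENNReal.toReal_eq_zero_iff _).1 hq |>.resolve_right (Q.apply_ne_top a)),
    ENNReal.toReal_zero]

/-- Pinsker's inequality with a suboptimal constant. -/
theorem l1_le {α : Type*} [Fintype α] (P Q : PMF α) {ε : ℝ} (h : klDivPMF P Q ≤ (ε : EReal)) :
    ∑ a, |(P a).toReal - (Q a).toReal| ≤ 2 * √ε := by
  unfold klDivPMF at h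
  split_ifs at h with hac
  swap
  · exact absurd (top_le_iff.1 h) (EReal.coe_ne_top ε)
  have hH := (hellinger_le P Q hac).trans (EReal.coe_le_coe_iff.1 h)
  have hε : 0 ≤ ε := (Finset.sum_nonneg fun a _ => sq_nonneg _).trans hH
  have hplus : ∑ a, (√(P a).toReal + √(Q a).toReal) ^ 2 ≤ 4 := by
    calc ∑ a, (√(P a).toReal + √(Q a).toReal) ^ 2
        ≤ ∑ a, (2 * (P a).toReal + 2 * (Q a).toReal) := by
          refine Finset.sum_le_sum fun a _ => ?_
          nlinarith [sq_nonneg (√(P a).toReal - √(Q a).toReal),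
            Real.sq_sqrt (ENNReal.toReal_nonneg (a := P a)),
            Real.sq_sqrt (ENNReal.toReal_nonneg (a := Q a))]
      _ = 4 := by
          rw [Finset.sum_add_distrib, ← Finset.mul_sum, ← Finset.mul_sum, pmf_sum_toReal,
            pmf_sum_toReal]
          norm_num
  have hfac : ∀ a, |(P a).toReal - (Q a).toReal|
      = |√(P a).toReal - √(Q a).toReal| * (√(P a).toReal + √(Q a).toReal) := by
    intro a
    rw [← abs_of_nonneg (add_nonneg (Real.sqrt_nonneg (P a).toReal)
      (Real.sqrt_nonneg (Q a).toReal)), ← abs_mul, mul_comm, ← sq_sub_sq,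
      Real.sq_sqrt ENNReal.toReal_nonneg, Real.sq_sqrt ENNReal.toReal_nonneg]
  have hcs := Finset.sum_mul_sq_le_sq_mul_sq Finset.univ
    (fun a => |√(P a).toReal - √(Q a).toReal|) (fun a => √(P a).toReal + √(Q a).toReal)
  simp only [← hfac, sq_abs] at hcs
  refine abs_le_of_sq_le_sq' ?_ (by positivity) |>.2
  rw [mul_pow, Real.sq_sqrt hε]
  have := mul_le_mul hH hplus (Finset.sum_nonneg fun a _ => sq_nonneg _) hε
  linarith

theorem pmfExp_le_of_kl {α : Type*} [Fintype α] (P Q : PMF α) {ε : ℝ}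
    (h : klDivPMF P Q ≤ (ε : EReal)) {f : α → ℝ} {M : ℝ} (hf : ∀ a, 0 ≤ f a ∧ f a ≤ M) :
    pmfExp P f ≤ pmfExp Q f + 2 * M * √ε := by
  have hM : 0 ≤ M := (pmfExp_mem P hf).1.trans (pmfExp_mem P hf).2
  have h1 : pmfExp P f - pmfExp Q f ≤ (∑ a, |(P a).toReal - (Q a).toReal|) * M := by
    rw [pmfExp, pmfExp, ← Finset.sum_sub_distrib, Finset.sum_mul]
    refine Finset.sum_le_sum fun a _ => ?_
    rw [← sub_mul]
    exact (mul_le_mul_of_nonneg_right (le_abs_self _) (hf a).1).trans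
      (mul_le_mul_of_nonneg_left (hf a).2 (abs_nonneg _))
  have h2 := mul_le_mul_of_nonneg_right (l1_le P Q h) hM
  linarith

/-- The shift bound indexed from time zero: after `n` transitions only `n` per-step errors have
accumulated, one fewer than the time index. -/
theorem shift_aux {S A : Type*} [Fintype S] [Fintype A]
    (μ₁ : PMF S) (p : S → A → PMF S) (π πbar : S → PMF A) (ε : ℝ)
    (hkl : ∀ x, klDivPMF (π x) (πbar x) ≤ (ε : EReal)) (fmax : ℝ) (n : ℕ) :
    ∀ f : S → ℝ, (∀ x, 0 ≤ f x ∧ f x ≤ fmax) →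
      pmfExp (stateDist p π μ₁ n) f
        ≤ pmfExp (stateDist p πbar μ₁ n) f + 2 * fmax * n * √ε := by
  induction n with
  | zero => intro f _; simp [stateDist]
  | succ n ih =>
    intro f hf
    simp only [stateDist, pmfExp_bind]
    have hp : ∀ x u, 0 ≤ pmfExp (p x u) f ∧ pmfExp (p x u) f ≤ fmax :=
      fun x u => pmfExp_mem _ hf
    have h1 := ih (fun x => pmfExp (π x) fun u => pmfExp (p x u) f)
      fun x => pmfExp_mem _ (hp x)
    have h2 := pmfExp_mono (stateDist p πbar μ₁ n)
      fun x => pmfExp_le_of_kl (π x) (πbar x) (hkl x) (hp x)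
    rw [pmfExp_add_const] at h2
    push_cast
    linarith

/-- **Expectation shift bound.** If `KL(π(x) ‖ π̃(x)) ≤ ε` for all states `x`, then for
every `f : S → ℝ` with `0 ≤ f(x) ≤ f_max` and every time `t ≥ 1`
(recall `d_π^t = stateDist p π μ₁ (t-1)`),
`E_{x ∼ d_π^t}[f(x)] ≤ E_{x ∼ d_π̃^t}[f(x)] + 2·f_max·t·√ε`. -/
theorem expectation_shift {S A : Type*} [Fintype S] [Fintype A]
    (μ₁ : PMF S) (p : S → A → PMF S) (π πbar : S → PMF A) (ε : ℝ)
    (hkl : ∀ x, klDivPMF (π x) (πbar x) ≤ ((ε : ℝ) : EReal)) :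
    ∀ (f : S → ℝ) (fmax : ℝ), (∀ x, 0 ≤ f x ∧ f x ≤ fmax) →
      ∀ t : ℕ, 1 ≤ t →
        pmfExp (stateDist p π μ₁ (t - 1)) f
          ≤ pmfExp (stateDist p πbar μ₁ (t - 1)) f + 2 * fmax * t * Real.sqrt ε := by
  intro f fmax hf t ht
  have h := shift_aux μ₁ p π πbar ε hkl fmax (t - 1) f hf
  -- `S` is nonempty since it carries a PMF, so `0 ≤ fmax`.
  have hM : 0 ≤ fmax := (pmfExp_mem μ₁ hf).1.trans (pmfExp_mem μ₁ hf).2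
  have hle : ((t - 1 : ℕ) : ℝ) ≤ t := by exact_mod_cast Nat.sub_le t 1
  have : 2 * fmax * ((t - 1 : ℕ) : ℝ) * √ε ≤ 2 * fmax * t * √ε := by gcongr
  linarith
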